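/- For n = 2, there exists a social choice function f : S₀² → A that is onto and pairwise strategy-proof but is not a target rule with a default. (In particular, the serial dictatorship f^d with f^d(R) = τ(R_1) if R_1 ≠ R⁰, f^d(R) = τ(R_2) if R_1 = R⁰ and R_2 ≠ R⁰, and f^d(R⁰, R⁰) = 0, has these properties.) -/

import Mathlib

/-- The set of alternatives: the closed interval [0,1]. -/
abbrev A : Type := Set.Icc (0:ℝ) 1

def zeroA : A := ⟨0, by constructor <;> norm_num⟩
def oneA : A := ⟨1, by constructor <;> norm_num⟩

/-- A preference: a complete (total) and transitive binary relation on A. -/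
structure Pref : Type where
  rel : A → A → Prop
  total : ∀ a b : A, rel a b ∨ rel b a
  trans : ∀ a b c : A, rel a b → rel b c → rel a c

/-- Strict part of a preference. -/
def Pref.P (R : Pref) (a b : A) : Prop := R.rel a b ∧ ¬ R.rel b a

/-- `p` is a peak of `R`: `R` is single-peaked with peak `p`. -/
def Pref.IsPeak (R : Pref) (p : A) : Prop :=
  ∀ a b : A, ((p ≤ a ∧ a < b) ∨ (b < a ∧ a ≤ p)) → R.P a b

/-- Single-peaked preferences. -/
def SinglePeaked (R : Pref) : Prop := ∃ p : A, R.IsPeak p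

/-- The completely indifferent preference R⁰. -/
def R0 : Pref :=
  ⟨fun _ _ => True, fun _ _ => Or.inl trivial, fun _ _ _ _ _ => trivial⟩

/-- The augmented domain S₀ = S ∪ {R⁰}. -/
def S0 : Type := {R : Pref // SinglePeaked R ∨ R = R0}

/-- The completely indifferent profile R^{0N}. -/
def indiffProfile (n : ℕ) : Fin n → S0 := fun _ => ⟨R0, Or.inr rfl⟩

open Classical in
/-- The peak of a single-peaked preference (junk value `zeroA` otherwise). -/
noncomputable def peak (R : Pref) : A :=
  if h : SinglePeaked R then h.choose else zeroA

/-- τ̲(R): the smallest peak among non-indifferent agents (as a real number). -/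
noncomputable def tmin {n : ℕ} (R : Fin n → S0) : ℝ :=
  sInf {x : ℝ | ∃ i : Fin n, (R i).1 ≠ R0 ∧ ((peak (R i).1 : ℝ) = x)}

/-- τ̄(R): the largest peak among non-indifferent agents (as a real number). -/
noncomputable def tmax {n : ℕ} (R : Fin n → S0) : ℝ :=
  sSup {x : ℝ | ∃ i : Fin n, (R i).1 ≠ R0 ∧ ((peak (R i).1 : ℝ) = x)}

/-- Onto-ness. -/
def Onto {n : ℕ} (f : (Fin n → S0) → A) : Prop := ∀ a : A, ∃ R : Fin n → S0, f R = a

/-- (Individual) strategy-proofness. -/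
def StrategyProof {n : ℕ} (f : (Fin n → S0) → A) : Prop :=
  ∀ (R : Fin n → S0) (i : Fin n) (Ri' : S0),
    (R i).1.rel (f R) (f (Function.update R i Ri'))

/-- No profitable deviation by the coalition `S`. -/
def CoalitionSP {n : ℕ} (f : (Fin n → S0) → A) (S : Finset (Fin n)) : Prop :=
  ¬ ∃ R R' : Fin n → S0,
      (∀ i ∉ S, R' i = R i) ∧
      (∀ i ∈ S, (R i).1.rel (f R') (f R)) ∧
      (∃ j ∈ S, (R j).1.P (f R') (f R))

/-- Group strategy-proofness. -/
def GroupSP {n : ℕ} (f : (Fin n → S0) → A) : Prop :=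
  ∀ S : Finset (Fin n), S.Nonempty → CoalitionSP f S

/-- Pairwise strategy-proofness. -/
def PairwiseSP {n : ℕ} (f : (Fin n → S0) → A) : Prop :=
  ∀ S : Finset (Fin n), S.Nonempty → S.card ≤ 2 → CoalitionSP f S

/-- No deviation making every member of `S` strictly better off. -/
def WeakCoalitionSP {n : ℕ} (f : (Fin n → S0) → A) (S : Finset (Fin n)) : Prop :=
  ¬ ∃ R R' : Fin n → S0,
      (∀ i ∉ S, R' i = R i) ∧
      (∀ i ∈ S, (R i).1.P (f R') (f R))

/-- Weak group strategy-proofness. -/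
def WeakGroupSP {n : ℕ} (f : (Fin n → S0) → A) : Prop :=
  ∀ S : Finset (Fin n), S.Nonempty → WeakCoalitionSP f S

/-- `a` is efficient at the profile `R`. -/
def EfficientAt {n : ℕ} (R : Fin n → S0) (a : A) : Prop :=
  ¬ ∃ b : A, b ≠ a ∧ (∀ i : Fin n, (R i).1.rel b a) ∧ (∃ j : Fin n, (R j).1.P b a)

/-- Efficiency of a social choice function. -/
def Efficient {n : ℕ} (f : (Fin n → S0) → A) : Prop := ∀ R : Fin n → S0, EfficientAt R (f R)

/-- The tops-only property. -/
def TopsOnly {n : ℕ} (f : (Fin n → S0) → A) : Prop :=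
  ∀ R R' : Fin n → S0,
    (∀ i : Fin n, (R i).1 = R0 ↔ (R' i).1 = R0) →
    (∀ i : Fin n, (R i).1 ≠ R0 → peak (R i).1 = peak (R' i).1) →
    f R = f R'

/-- Target rules with a default. -/
def IsTargetRule {n : ℕ} (f : (Fin n → S0) → A) : Prop :=
  ∃ x y : A, f (indiffProfile n) = y ∧
    ∀ R : Fin n → S0, R ≠ indiffProfile n →
      ((tmin R ≤ (x : ℝ) ∧ (x : ℝ) ≤ tmax R) → f R = x) ∧
      ((x : ℝ) < tmin R → (f R : ℝ) = tmin R) ∧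
      (tmax R < (x : ℝ) → (f R : ℝ) = tmax R)

lemma R0_not_P (a b : A) : ¬ R0.P a b := fun h => h.2 trivial

lemma peak_spec {R : Pref} (h : SinglePeaked R) : R.IsPeak (peak R) := by
  unfold peak
  rw [dif_pos h]
  exact h.choose_spec

lemma isPeak_top {R : Pref} {p : A} (h : R.IsPeak p) (b : A) (hb : R.rel b p) : b = p := by
  by_contra hne
  rcases lt_or_gt_of_ne hne with hlt | hlt
  · exact (h p b (Or.inr ⟨hlt, le_refl p⟩)).2 hb
  · exact (h p b (Or.inl ⟨le_refl p, hlt⟩)).2 hb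

/-- The Euclidean preference with peak `p`. -/
def euc (p : A) : Pref where
  rel a b := |(a : ℝ) - p| ≤ |(b : ℝ) - p|
  total _ _ := le_total _ _
  trans _ _ _ := le_trans

lemma euc_isPeak (p : A) : (euc p).IsPeak p := by
  intro a b h
  have key : |(a : ℝ) - p| < |(b : ℝ) - p| := by
    rcases h with ⟨h1, h2⟩ | ⟨h1, h2⟩
    · have h1 : (p : ℝ) ≤ a := h1
      have h2 : (a : ℝ) < b := h2
      rw [abs_of_nonneg (by linarith), abs_of_nonneg (by linarith)]
      linarith
    · have h1 : (b : ℝ) < a := h1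
      have h2 : (a : ℝ) ≤ p := h2
      rw [abs_of_nonpos (by linarith), abs_of_nonpos (by linarith)]
      linarith
  exact ⟨key.le, not_le.mpr key⟩

lemma peak_euc (p : A) : peak (euc p) = p := by
  refine isPeak_top (euc_isPeak p) _ ?_
  by_contra hcon
  have hs := peak_spec ⟨p, euc_isPeak p⟩
  have h2 : (euc p).rel p (peak (euc p)) := ((euc p).total _ _).resolve_right hcon
  have h3 := isPeak_top hs p h2
  apply hcon
  rw [← h3]
  exact le_refl _

lemma zero_lt_oneA : zeroA < oneA := by
  show (0 : ℝ) < 1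
  norm_num

lemma euc_ne (p : A) : euc p ≠ R0 := by
  intro h
  have hp := euc_isPeak p
  rw [h] at hp
  rcases le_or_gt p zeroA with h0 | h0
  · exact R0_not_P _ _ (hp zeroA oneA (Or.inl ⟨h0, zero_lt_oneA⟩))
  · exact R0_not_P _ _ (hp p zeroA (Or.inr ⟨h0, le_refl p⟩))

/-- The Euclidean preference as an element of the domain. -/
def eucS (p : A) : S0 := ⟨euc p, Or.inl ⟨p, euc_isPeak p⟩⟩

open Classical in
/-- The serial dictatorship. -/
noncomputable def fd (R : Fin 2 → S0) : A :=
  if (R 0).1 = R0 then peak (R 1).1 else peak (R 0).1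

lemma S0.top (R : S0) (h : R.1 ≠ R0) (b : A) (hb : R.1.rel b (peak R.1)) :
    b = peak R.1 :=
  isPeak_top (peak_spec (R.2.resolve_right h)) b hb

lemma not_P_self (R : Pref) (a : A) : ¬ R.P a a := fun h => h.2 h.1

lemma fd_onto : Onto fd := by
  intro a
  refine ⟨fun _ => eucS a, ?_⟩
  exact (if_neg (euc_ne a)).trans (peak_euc a)

lemma fd_pairwise : PairwiseSP fd := by
  rintro S - - ⟨R, R', hout, hin, j, hj, hP⟩
  by_cases h0 : (R 0).1 = R0
  · have hne : (R j).1 ≠ R0 := by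
      intro h
      rw [h] at hP
      exact R0_not_P _ _ hP
    have hj1 : j = 1 := by
      fin_cases j
      · exact absurd h0 hne
      · rfl
    subst hj1
    have hf : fd R = peak (R 1).1 := if_pos h0
    have := S0.top (R 1) hne (fd R') (hf ▸ hP.1)
    rw [this, hf] at hP
    exact not_P_self _ _ hP
  · have hf : fd R = peak (R 0).1 := if_neg h0
    have heq : fd R' = fd R := by
      by_cases hS : (0 : Fin 2) ∈ S
      · rw [hf]
        exact S0.top (R 0) h0 (fd R') (hf ▸ hin 0 hS)
      · have h := hout 0 hS
        rw [hf]
        unfold fd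
        rw [h, if_neg h0]
    rw [heq] at hP
    exact not_P_self _ _ hP

lemma peaks_set (p q : A) :
    {x : ℝ | ∃ i : Fin 2, ((![eucS p, eucS q] : Fin 2 → S0) i).1 ≠ R0 ∧
      ((peak ((![eucS p, eucS q] : Fin 2 → S0) i).1 : ℝ) = x)} = {(p : ℝ), (q : ℝ)} := by
  ext x
  simp only [Set.mem_ofPred_eq, Fin.exists_fin_two, Set.mem_insert_iff, Set.mem_singleton_iff]
  have hp : (eucS p).1 = euc p := rfl
  have hq : (eucS q).1 = euc q := rfl
  simp [hp, hq, euc_ne, peak_euc, eq_comm (b := x)]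

lemma fd_pair (p q : A) : fd ![eucS p, eucS q] = p := by
  have h : (![eucS p, eucS q] 0).1 ≠ R0 := euc_ne p
  unfold fd
  rw [if_neg h]
  exact peak_euc p

lemma pair_ne (p q : A) : ![eucS p, eucS q] ≠ indiffProfile 2 := by
  intro h
  exact euc_ne p (congrArg Subtype.val (congrFun h 0))

lemma fd_not_target : ¬ IsTargetRule fd := by
  rintro ⟨x, y, -, h⟩
  have key : ∀ p q : A, min (p : ℝ) q ≤ x → (x : ℝ) ≤ max (p : ℝ) q → p = x := by
    intro p q h1 h2
    have := (h _ (pair_ne p q)).1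
    rw [fd_pair] at this
    apply this
    unfold tmin tmax
    rw [peaks_set, csInf_pair, csSup_pair]
    exact ⟨h1, h2⟩
  have a1 := key zeroA oneA (le_trans (min_le_left _ _) x.2.1) (le_trans x.2.2 (le_max_right _ _))
  have a2 := key oneA zeroA (le_trans (min_le_right _ _) x.2.1) (le_trans x.2.2 (le_max_left _ _))
  exact zero_lt_oneA.ne (a1.trans a2.symm)

/-- For n = 2, there exists an SCF that is onto and pairwise
strategy-proof but is not a target rule with a default. -/
theorem stmt_14 :
    ∃ f : (Fin 2 → S0) → A,
      Onto f ∧ PairwiseSP f ∧ ¬ IsTargetRule f := by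
  exact ⟨fd, fd_onto, fd_pairwise, fd_not_target⟩
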